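/- arXiv:2404.08319 — 2 statements merged into one kernel-verified Lean document; each statement's English description precedes it below -/
import Mathlib

section
/- Let h:[a,b]→[0,∞) be a non-negative concave function with positive integral, and let α,β>0 with α≤β. Define g_α(h) = (∫_a^b t·h(t)^α dt)/(∫_a^b h(t)^α dt). Then (∫_{g_α(h)}^b h(t)^β dt)/(∫_a^b h(t)^β dt) ≥ ((α+1)/(α+2))^{β+1}. -/
/-!
Write `T p t = ∫ₜᵇ hᵖ` for the tail mass of the density `hᵖ`. Comparing `h` with its chords shows
that `h ^ (p + 1) / T p` is monotone. As `-hᵖ` is the derivative of `T p`, this says on the one hand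
that `T p ^ (1 / (p + 1))` is concave, so that Jensen's inequality for the density `hᵅ` gives
`T α g / T α a ≥ ((α + 1) / (α + 2)) ^ (α + 1)` at the centroid `g`. On the other hand, with
`T α` as a new variable, `T β` is the integral of `h ^ (β - α)`, which by the same monotonicity is
`T α ^ ((β - α) / (α + 1))` times a monotone function of `t`; hence
`T β x / T β a ≥ (T α x / T α a) ^ ((β + 1) / (α + 1))` for every `x`.
-/

open MeasureTheory Set

section TailIntegral

variable {a b s t : ℝ} {f : ℝ → ℝ}

theorem intervalIntegrable_of_mem_Icc (hf : IntervalIntegrable f volume a b) (hs : s ∈ Icc a b)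
    (ht : t ∈ Icc a b) : IntervalIntegrable f volume s t :=
  hf.mono_set (uIcc_subset_uIcc (Icc_subset_uIcc hs) (Icc_subset_uIcc ht))

theorem integral_add_tail (hf : IntervalIntegrable f volume a b) (hs : s ∈ Icc a b)
    (ht : t ∈ Icc a b) : (∫ u in s..t, f u) + ∫ u in t..b, f u = ∫ u in s..b, f u :=
  intervalIntegral.integral_add_adjacent_intervals (intervalIntegrable_of_mem_Icc hf hs ht)
    (intervalIntegrable_of_mem_Icc hf ht (right_mem_Icc.2 (ht.1.trans ht.2)))

theorem tail_nonneg (hf₀ : ∀ u ∈ Icc a b, 0 ≤ f u) (ht : t ∈ Icc a b) : 0 ≤ ∫ u in t..b, f u :=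
  intervalIntegral.integral_nonneg ht.2 fun u hu => hf₀ u ⟨ht.1.trans hu.1, hu.2⟩

theorem tail_antitoneOn (hf : IntervalIntegrable f volume a b) (hf₀ : ∀ u ∈ Icc a b, 0 ≤ f u) :
    AntitoneOn (fun t => ∫ u in t..b, f u) (Icc a b) := fun s hs t ht hst => by
  have hsplit := integral_add_tail hf hs ht
  have hmid : 0 ≤ ∫ u in s..t, f u :=
    intervalIntegral.integral_nonneg hst fun u hu => hf₀ u ⟨hs.1.trans hu.1, hu.2.trans ht.2⟩
  linarith

theorem continuousOn_tail (hab : a ≤ b) (hf : IntervalIntegrable f volume a b) :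
    ContinuousOn (fun t => ∫ u in t..b, f u) (Icc a b) := by
  have hint : IntegrableOn f (uIcc a b) :=
    uIcc_of_le hab ▸ (intervalIntegrable_iff_integrableOn_Icc_of_le hab).1 hf
  simpa only [uIcc_of_le hab] using intervalIntegral.continuousOn_primitive_interval_left hint

theorem hasDerivAt_tail (hf : IntervalIntegrable f volume a b) (hfc : ContinuousOn f (Ioo a b))
    (ht : t ∈ Ioo a b) : HasDerivAt (fun t => ∫ u in t..b, f u) (-f t) t :=
  intervalIntegral.integral_hasDerivAt_left
    (intervalIntegrable_of_mem_Icc hf (Ioo_subset_Icc_self ht)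
      (right_mem_Icc.2 (ht.1.trans ht.2).le))
    (hfc.stronglyMeasurableAtFilter isOpen_Ioo t ht) (hfc.continuousAt (isOpen_Ioo.mem_nhds ht))

theorem intervalIntegrable_tail_rpow_mul {q : ℝ} (hab : a ≤ b)
    (hf : IntervalIntegrable f volume a b) (hq : 0 ≤ q) :
    IntervalIntegrable (fun t => (∫ u in t..b, f u) ^ q * f t) volume a b :=
  hf.continuousOn_mul <| by
    rw [uIcc_of_le hab]
    exact (continuousOn_tail hab hf).rpow_const fun _ _ => Or.inr hq

theorem integral_tail_rpow_mul {q : ℝ} (hf : IntervalIntegrable f volume a b)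
    (hfc : ContinuousOn f (Ioo a b)) (hq : 0 ≤ q) (hs : s ∈ Icc a b) (ht : t ∈ Icc a b)
    (hst : s ≤ t) :
    ∫ u in s..t, (∫ v in u..b, f v) ^ q * f u =
      ((∫ u in s..b, f u) ^ (q + 1) - (∫ u in t..b, f u) ^ (q + 1)) / (q + 1) := by
  have hab : a ≤ b := hs.1.trans hs.2
  have hq₁ : q + 1 ≠ 0 := by positivity
  have hcont : ContinuousOn (fun u => (∫ v in u..b, f v) ^ (q + 1) * (-1 / (q + 1))) (Icc s t) :=
    (((continuousOn_tail hab hf).rpow_const fun _ _ => Or.inr (by positivity)).mul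
      continuousOn_const).mono (Icc_subset_Icc hs.1 ht.2)
  rw [intervalIntegral.integral_eq_sub_of_hasDerivAt_of_le hst hcont (fun u hu => ?_)
    (intervalIntegrable_of_mem_Icc (intervalIntegrable_tail_rpow_mul hab hf hq) hs ht)]
  · ring
  · have hderiv := hasDerivAt_tail hf hfc ⟨hs.1.trans_lt hu.1, hu.2.trans_le ht.2⟩
    refine ((hderiv.rpow_const (p := q + 1) (Or.inr (by linarith))).mul_const _).congr_deriv ?_
    rw [add_sub_cancel_right]
    field_simp

theorem mul_integral_le_mul_integral {c d : ℝ} {g : ℝ → ℝ} (hst : s ≤ t)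
    (hf : IntervalIntegrable f volume s t) (hg : IntervalIntegrable g volume s t)
    (hle : ∀ u ∈ Icc s t, c * f u ≤ d * g u) : c * ∫ u in s..t, f u ≤ d * ∫ u in s..t, g u := by
  simpa only [intervalIntegral.integral_const_mul] using
    intervalIntegral.integral_mono_on hst (hf.const_mul c) (hg.const_mul d) hle

theorem tail_rpow_mul_integral_mul_le {q x : ℝ} {w : ℝ → ℝ} (hf : IntervalIntegrable f volume a b)
    (hfc : ContinuousOn f (Ioo a b)) (hf₀ : ∀ t ∈ Icc a b, 0 ≤ f t)
    (hwf : IntervalIntegrable (fun t => w t * f t) volume a b) (hw₀ : ∀ t ∈ Icc a b, 0 ≤ w t)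
    (hq : 0 ≤ q)
    (hw : ∀ s ∈ Icc a b, ∀ t ∈ Icc a b, s ≤ t →
      w s * (∫ u in t..b, f u) ^ q ≤ w t * (∫ u in s..b, f u) ^ q)
    (hx : x ∈ Icc a b) :
    (∫ t in x..b, f t) ^ (q + 1) * ∫ t in a..b, w t * f t ≤
      (∫ t in a..b, f t) ^ (q + 1) * ∫ t in x..b, w t * f t := by
  have hab : a ≤ b := hx.1.trans hx.2
  have ha : a ∈ Icc a b := left_mem_Icc.2 hab
  have hb : b ∈ Icc a b := right_mem_Icc.2 hab
  have hwf₀ : ∀ t ∈ Icc a b, 0 ≤ w t * f t := fun t ht => mul_nonneg (hw₀ t ht) (hf₀ t ht)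
  rcases (tail_nonneg hf₀ hx).eq_or_lt with hTx | hTx
  · rw [← hTx, Real.zero_rpow (by positivity), zero_mul]
    exact mul_nonneg (Real.rpow_nonneg (tail_nonneg hf₀ ha) _) (tail_nonneg hwf₀ hx)
  have hTf := intervalIntegrable_tail_rpow_mul hab hf hq
  have hright : w x * ((∫ t in x..b, f t) ^ (q + 1) / (q + 1)) ≤
      (∫ t in x..b, f t) ^ q * ∫ t in x..b, w t * f t := by
    have hvar := integral_tail_rpow_mul hf hfc hq hx hb hx.2
    rw [intervalIntegral.integral_same, Real.zero_rpow (by positivity), sub_zero] at hvar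
    refine hvar ▸ mul_integral_le_mul_integral hx.2 (intervalIntegrable_of_mem_Icc hTf hx hb)
      (intervalIntegrable_of_mem_Icc hwf hx hb) fun t ht => ?_
    have ht' : t ∈ Icc a b := ⟨hx.1.trans ht.1, ht.2⟩
    linear_combination mul_le_mul_of_nonneg_right (hw x hx t ht' ht.1) (hf₀ t ht')
  have hleft : (∫ t in x..b, f t) ^ q * ∫ t in a..x, w t * f t ≤
      w x * (((∫ t in a..b, f t) ^ (q + 1) - (∫ t in x..b, f t) ^ (q + 1)) / (q + 1)) := by
    rw [← integral_tail_rpow_mul hf hfc hq ha hx hx.1]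
    refine mul_integral_le_mul_integral hx.1 (intervalIntegrable_of_mem_Icc hwf ha hx)
      (intervalIntegrable_of_mem_Icc hTf ha hx) fun t ht => ?_
    have ht' : t ∈ Icc a b := ⟨ht.1, ht.2.trans hx.2⟩
    linear_combination mul_le_mul_of_nonneg_right (hw t ht' x hx ht.2) (hf₀ t ht')
  have hX : 0 ≤ (∫ t in x..b, f t) ^ (q + 1) := Real.rpow_nonneg hTx.le _
  have hXA : (∫ t in x..b, f t) ^ (q + 1) ≤ (∫ t in a..b, f t) ^ (q + 1) :=
    Real.rpow_le_rpow hTx.le (tail_antitoneOn hf hf₀ ha hx hx.1) (by positivity)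
  have hsplit := integral_add_tail hwf ha hx
  refine le_of_mul_le_mul_left ?_ (Real.rpow_pos_of_pos hTx q)
  rw [← hsplit]
  linear_combination mul_le_mul_of_nonneg_left hleft hX +
    mul_le_mul_of_nonneg_left hright (sub_nonneg.2 hXA)

end TailIntegral

section Centroid

variable {a b : ℝ} {f : ℝ → ℝ}

/-- The centroid of the interval `[a, b]` for the mass density `f`. It has the junk value `0` when
the total mass vanishes. -/
noncomputable def centroid (a b : ℝ) (f : ℝ → ℝ) : ℝ :=
  (∫ t in a..b, t * f t) / ∫ t in a..b, f t

theorem centroid_mem_hypograph {F : ℝ → ℝ} (hab : a ≤ b) (hf : IntervalIntegrable f volume a b)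
    (hf₀ : ∀ t ∈ Icc a b, 0 ≤ f t) (hmass : 0 < ∫ t in a..b, f t)
    (hF : ConcaveOn ℝ (Icc a b) F) (hFc : ContinuousOn F (Icc a b)) :
    (centroid a b f, (∫ t in a..b, F t * f t) / ∫ t in a..b, f t) ∈
      {q : ℝ × ℝ | q.1 ∈ Icc a b ∧ q.2 ≤ F q.1} := by
  set ν := (volume.restrict (Ioc a b)).withDensity fun t => ENNReal.ofReal (f t)
  have hfi : Integrable f (volume.restrict (Ioc a b)) := hf.1
  have hfm : AEMeasurable (fun t => ENNReal.ofReal (f t)) (volume.restrict (Ioc a b)) :=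
    hfi.aemeasurable.ennreal_ofReal
  have htop : ∀ᵐ t ∂volume.restrict (Ioc a b), ENNReal.ofReal (f t) < ⊤ :=
    .of_forall fun _ => ENNReal.ofReal_lt_top
  have hdens (G : ℝ → ℝ) : (fun t => (ENNReal.ofReal (f t)).toReal • G t)
      =ᵐ[volume.restrict (Ioc a b)] fun t => G t * f t := by
    filter_upwards [ae_restrict_mem measurableSet_Ioc] with t ht
    rw [ENNReal.toReal_ofReal (hf₀ t (Ioc_subset_Icc_self ht)), smul_eq_mul, mul_comm]
  have hint (G : ℝ → ℝ) : ∫ t, G t ∂ν = ∫ t in a..b, G t * f t := by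
    rw [integral_withDensity_eq_integral_toReal_smul₀ hfm htop, integral_congr_ae (hdens G),
      intervalIntegral.integral_of_le hab]
  have hintegrable {G : ℝ → ℝ} (hG : ContinuousOn G (Icc a b)) : Integrable G ν := by
    rw [integrable_withDensity_iff_integrable_smul₀' hfm htop, integrable_congr (hdens G)]
    exact (hf.continuousOn_mul (by rwa [uIcc_of_le hab])).1
  have hν_univ : ν.real univ = ∫ t in a..b, f t := by
    simpa using hint fun _ => 1
  have havg (G : ℝ → ℝ) : ⨍ t, G t ∂ν = (∫ t in a..b, G t * f t) / ∫ t in a..b, f t := by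
    rw [average_eq, hν_univ, hint, smul_eq_mul, inv_mul_eq_div]
  have : IsFiniteMeasure ν := isFiniteMeasure_withDensity_ofReal hfi.2
  have : NeZero ν := ⟨fun h0 => by simp [← hν_univ, h0] at hmass⟩
  have hsupp : ∀ᵐ t ∂ν, t ∈ Icc a b := (withDensity_absolutelyContinuous _ _).ae_le <| by
    filter_upwards [ae_restrict_mem measurableSet_Ioc] with t ht using Ioc_subset_Icc_self ht
  have hjensen := hF.average_mem_hypograph hFc isClosed_Icc hsupp (hintegrable continuousOn_id)
    (hintegrable hFc)
  rwa [havg, havg] at hjensen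

theorem centroid_mem_Icc (hab : a ≤ b) (hf : IntervalIntegrable f volume a b)
    (hf₀ : ∀ t ∈ Icc a b, 0 ≤ f t) (hmass : 0 < ∫ t in a..b, f t) : centroid a b f ∈ Icc a b :=
  (centroid_mem_hypograph hab hf hf₀ hmass (concaveOn_const 0 (convex_Icc a b))
    continuousOn_const).1

theorem inv_add_one_le_tail_centroid_rpow {s : ℝ} (hab : a ≤ b)
    (hf : IntervalIntegrable f volume a b) (hfc : ContinuousOn f (Ioo a b))
    (hf₀ : ∀ t ∈ Icc a b, 0 ≤ f t) (hmass : 0 < ∫ t in a..b, f t) (hs : 0 ≤ s)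
    (hconc : ConcaveOn ℝ (Icc a b) fun t => (∫ u in t..b, f u) ^ s) :
    (s + 1)⁻¹ ≤ ((∫ u in centroid a b f..b, f u) / ∫ u in a..b, f u) ^ s := by
  have hg := centroid_mem_Icc hab hf hf₀ hmass
  have hjensen := (centroid_mem_hypograph hab hf hf₀ hmass hconc
    ((continuousOn_tail hab hf).rpow_const fun _ _ => Or.inr hs)).2
  rw [integral_tail_rpow_mul hf hfc hs (left_mem_Icc.2 hab) (right_mem_Icc.2 hab) hab,
    intervalIntegral.integral_same, Real.zero_rpow (by positivity), sub_zero,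
    Real.rpow_add_one hmass.ne'] at hjensen
  rw [Real.div_rpow (tail_nonneg hf₀ hg) hmass.le, le_div_iff₀ (Real.rpow_pos_of_pos hmass s)]
  refine Eq.trans_le ?_ hjensen
  field_simp

end Centroid

section ConcavePower

variable {a b p : ℝ} {h : ℝ → ℝ}

theorem pos_of_concaveOn_of_integral_pos (hab : a ≤ b) (hconc : ConcaveOn ℝ (Icc a b) h)
    (hnn : ∀ t ∈ Icc a b, 0 ≤ h t) (hint : 0 < ∫ t in a..b, h t) : ∀ t ∈ Ioo a b, 0 < h t := by
  obtain ⟨u, hu, hu_pos⟩ : ∃ u ∈ Icc a b, 0 < h u := by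
    by_contra! hle
    rw [intervalIntegral.integral_of_le hab] at hint
    exact hint.not_ge
      (setIntegral_nonpos measurableSet_Ioc fun t ht => hle t (Ioc_subset_Icc_self ht))
  intro t ht
  by_contra! hle
  have htu : h t < h u := hle.trans_lt hu_pos
  rcases lt_trichotomy t u with hlt | rfl | hgt
  · have ha := left_mem_Icc.2 hab
    exact (hnn a ha).not_gt ((hconc.left_lt_of_lt_right ha hu
      (openSegment_eq_Ioo (ht.1.trans hlt) ▸ ⟨ht.1, hlt⟩) htu).trans_le hle)
  · exact htu.false
  · have hb := right_mem_Icc.2 hab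
    exact (hnn b hb).not_gt ((hconc.lt_right_of_left_lt hu hb
      (openSegment_eq_Ioo (hgt.trans ht.2) ▸ ⟨hgt, ht.2⟩) htu).trans_le hle)

theorem continuousOn_Ioo_rpow_of_concaveOn (hconc : ConcaveOn ℝ (Icc a b) h) (hp : 0 ≤ p) :
    ContinuousOn (fun t => h t ^ p) (Ioo a b) :=
  (interior_Icc (a := a) (b := b) ▸ hconc.continuousOn_interior).rpow_const fun _ _ => Or.inr hp

theorem le_two_mul_midpoint_of_concaveOn (hconc : ConcaveOn ℝ (Icc a b) h)
    (hnn : ∀ t ∈ Icc a b, 0 ≤ h t) {t : ℝ} (ht : t ∈ Icc a b) : h t ≤ 2 * h ((a + b) / 2) := by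
  have hrefl : a + b - t ∈ Icc a b := ⟨by linarith [ht.2], by linarith [ht.1]⟩
  have hmid := hconc.2 ht hrefl one_half_pos.le one_half_pos.le (add_halves 1)
  simp only [smul_eq_mul] at hmid
  rw [show 1 / 2 * t + 1 / 2 * (a + b - t) = (a + b) / 2 by ring] at hmid
  linarith [hnn _ hrefl]

theorem intervalIntegrable_rpow_of_concaveOn (hab : a ≤ b) (hconc : ConcaveOn ℝ (Icc a b) h)
    (hnn : ∀ t ∈ Icc a b, 0 ≤ h t) (hp : 0 ≤ p) :
    IntervalIntegrable (fun t => h t ^ p) volume a b := by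
  rw [intervalIntegrable_iff_integrableOn_Ioo_of_le hab]
  refine IntegrableOn.of_bound (C := (2 * h ((a + b) / 2)) ^ p) measure_Ioo_lt_top
    ((continuousOn_Ioo_rpow_of_concaveOn hconc hp).aestronglyMeasurable measurableSet_Ioo) ?_
  filter_upwards [ae_restrict_mem measurableSet_Ioo] with t ht
  have ht' := Ioo_subset_Icc_self ht
  rw [Real.norm_of_nonneg (Real.rpow_nonneg (hnn t ht') p)]
  exact Real.rpow_le_rpow (hnn t ht') (le_two_mul_midpoint_of_concaveOn hconc hnn ht') hp

theorem tail_rpow_pos (hconc : ConcaveOn ℝ (Icc a b) h) (hnn : ∀ t ∈ Icc a b, 0 ≤ h t)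
    (hpos : ∀ t ∈ Ioo a b, 0 < h t) (hp : 0 ≤ p) {t : ℝ} (ht : t ∈ Ico a b) :
    0 < ∫ u in t..b, h u ^ p := by
  have hab : a ≤ b := ht.1.trans ht.2.le
  refine intervalIntegral.intervalIntegral_pos_of_pos_on ?_
    (fun u hu => Real.rpow_pos_of_pos (hpos u ⟨ht.1.trans_lt hu.1, hu.2⟩) p) ht.2
  exact intervalIntegrable_of_mem_Icc (intervalIntegrable_rpow_of_concaveOn hab hconc hnn hp)
    (Ico_subset_Icc_self ht) (right_mem_Icc.2 hab)

theorem integral_sub_mul_rpow {c m s t : ℝ} (hm : m ≠ 0) (hp : -1 < p) :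
    ∫ u in s..t, (c - m * u) ^ p =
      ((c - m * s) ^ (p + 1) - (c - m * t) ^ (p + 1)) / (m * (p + 1)) := by
  rw [intervalIntegral.integral_comp_sub_mul (fun u => u ^ p) hm, integral_rpow (Or.inl hp),
    smul_eq_mul, inv_mul_eq_div, div_div, mul_comm (p + 1)]

theorem intervalIntegrable_sub_mul_rpow (hp : 0 ≤ p) (c m s t : ℝ) :
    IntervalIntegrable (fun u => (c - m * u) ^ p) volume s t :=
  (Continuous.rpow_const (by fun_prop) fun _ => Or.inr hp).intervalIntegrable s t

theorem integral_rpow_le_of_le_sub_mul {c m s t : ℝ} (hp : 0 ≤ p) (hm : 0 < m) (hst : s ≤ t)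
    (hI : IntervalIntegrable (fun u => h u ^ p) volume s t) (hnn : ∀ u ∈ Icc s t, 0 ≤ h u)
    (hle : ∀ u ∈ Icc s t, h u ≤ c - m * u) :
    ∫ u in s..t, h u ^ p ≤ (c - m * s) ^ (p + 1) / (m * (p + 1)) := by
  have ht := right_mem_Icc.2 hst
  calc ∫ u in s..t, h u ^ p ≤ ∫ u in s..t, (c - m * u) ^ p :=
        intervalIntegral.integral_mono_on hst hI (intervalIntegrable_sub_mul_rpow hp c m s t)
          fun u hu => Real.rpow_le_rpow (hnn u hu) (hle u hu) hp
    _ = ((c - m * s) ^ (p + 1) - (c - m * t) ^ (p + 1)) / (m * (p + 1)) :=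
        integral_sub_mul_rpow hm.ne' (by linarith)
    _ ≤ (c - m * s) ^ (p + 1) / (m * (p + 1)) := by
        gcongr
        exact sub_le_self _ (Real.rpow_nonneg ((hnn t ht).trans (hle t ht)) _)

theorem le_integral_rpow_of_sub_mul_le {c m s t : ℝ} (hp : 0 ≤ p) (hm : 0 < m) (hst : s ≤ t)
    (hI : IntervalIntegrable (fun u => h u ^ p) volume s t) (hct : 0 ≤ c - m * t)
    (hle : ∀ u ∈ Icc s t, c - m * u ≤ h u) :
    ((c - m * s) ^ (p + 1) - (c - m * t) ^ (p + 1)) / (m * (p + 1)) ≤ ∫ u in s..t, h u ^ p := by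
  rw [← integral_sub_mul_rpow hm.ne' (by linarith)]
  refine intervalIntegral.integral_mono_on hst (intervalIntegrable_sub_mul_rpow hp c m s t) hI
    fun u hu => Real.rpow_le_rpow ?_ (hle u hu) hp
  exact hct.trans (by gcongr; exact hu.2)

theorem sub_mul_le_of_concaveOn {S : Set ℝ} {c m s t u : ℝ} (hconc : ConcaveOn ℝ S h)
    (hs : s ∈ S) (ht : t ∈ S) (hcs : c - m * s = h s) (hct : c - m * t = h t)
    (hu : u ∈ Icc s t) : c - m * u ≤ h u := by
  have hg : ConcaveOn ℝ S fun v => h v - (c - m * v) :=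
    hconc.sub ⟨hconc.1, fun x _ y _ v w _ _ hvw => by
      simp only [smul_eq_mul]
      exact le_of_eq (by linear_combination -c * hvw)⟩
  have hmin := hg.min_le_of_mem_Icc hs ht hu
  simpa [hcs, hct] using hmin

theorem le_sub_mul_of_concaveOn {S : Set ℝ} {c m s t u : ℝ} (hconc : ConcaveOn ℝ S h)
    (hs : s ∈ S) (hu : u ∈ S) (hcs : c - m * s = h s) (hct : c - m * t = h t) (hst : s < t)
    (htu : t ≤ u) : h u ≤ c - m * u := by
  rcases htu.eq_or_lt with rfl | htu
  · exact hct.ge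
  have hslope := hconc.slope_anti_adjacent hs hu hst htu
  rw [← hcs, ← hct, show c - m * t - (c - m * s) = -m * (t - s) by ring,
    mul_div_cancel_right₀ _ (sub_pos.2 hst).ne', div_le_iff₀ (sub_pos.2 htu)] at hslope
  linarith

theorem sub_rpow_mul_tail_le_of_concaveOn (hconc : ConcaveOn ℝ (Icc a b) h)
    (hnn : ∀ t ∈ Icc a b, 0 ≤ h t) (hp : 0 ≤ p) {s t : ℝ} (hs : s ∈ Icc a b) (ht : t ∈ Icc a b)
    (hst : s < t) (hlt : h t < h s) :
    (h s ^ (p + 1) - h t ^ (p + 1)) * ∫ u in t..b, h u ^ p ≤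
      h t ^ (p + 1) * ∫ u in s..t, h u ^ p := by
  have hab : a ≤ b := hs.1.trans hs.2
  have hb : b ∈ Icc a b := right_mem_Icc.2 hab
  have hI := intervalIntegrable_rpow_of_concaveOn hab hconc hnn hp
  -- `h` lies above its chord `c - m * u` on `[s, t]` and below it on `[t, b]`; for the chord
  -- itself, cut off at its zero instead of at `b`, the claim is an equality.
  obtain ⟨m, c, hm, hcs, hct⟩ : ∃ m c, 0 < m ∧ c - m * s = h s ∧ c - m * t = h t := by
    refine ⟨(h s - h t) / (t - s), h t + (h s - h t) / (t - s) * t,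
      div_pos (sub_pos.2 hlt) (sub_pos.2 hst), ?_, add_sub_cancel_right _ _⟩
    have := (sub_pos.2 hst).ne'
    field_simp
    ring
  have htail : ∫ u in t..b, h u ^ p ≤ h t ^ (p + 1) / (m * (p + 1)) :=
    hct ▸ integral_rpow_le_of_le_sub_mul hp hm ht.2 (intervalIntegrable_of_mem_Icc hI ht hb)
      (fun u hu => hnn u ⟨ht.1.trans hu.1, hu.2⟩) fun u hu =>
        le_sub_mul_of_concaveOn hconc hs ⟨ht.1.trans hu.1, hu.2⟩ hcs hct hst hu.1
  have hmid : (h s ^ (p + 1) - h t ^ (p + 1)) / (m * (p + 1)) ≤ ∫ u in s..t, h u ^ p := by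
    rw [← hcs, ← hct]
    exact le_integral_rpow_of_sub_mul_le hp hm hst.le (intervalIntegrable_of_mem_Icc hI hs ht)
      (hct ▸ hnn t ht) fun u hu => sub_mul_le_of_concaveOn hconc hs ht hcs hct hu
  have hdiff : 0 ≤ h s ^ (p + 1) - h t ^ (p + 1) :=
    sub_nonneg.2 (Real.rpow_le_rpow (hnn t ht) hlt.le (by positivity))
  calc _ ≤ (h s ^ (p + 1) - h t ^ (p + 1)) * (h t ^ (p + 1) / (m * (p + 1))) := by gcongr
    _ = h t ^ (p + 1) * ((h s ^ (p + 1) - h t ^ (p + 1)) / (m * (p + 1))) := by ring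
    _ ≤ _ := mul_le_mul_of_nonneg_left hmid (Real.rpow_nonneg (hnn t ht) _)

theorem rpow_mul_tail_le_of_concaveOn (hconc : ConcaveOn ℝ (Icc a b) h)
    (hnn : ∀ t ∈ Icc a b, 0 ≤ h t) (hp : 0 ≤ p) {s t : ℝ} (hs : s ∈ Icc a b) (ht : t ∈ Icc a b)
    (hst : s ≤ t) :
    h s ^ (p + 1) * ∫ u in t..b, h u ^ p ≤ h t ^ (p + 1) * ∫ u in s..b, h u ^ p := by
  have hI := intervalIntegrable_rpow_of_concaveOn (hs.1.trans hs.2) hconc hnn hp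
  have hrpow_nn : ∀ u ∈ Icc a b, 0 ≤ h u ^ p := fun u hu => Real.rpow_nonneg (hnn u hu) p
  rcases le_or_gt (h s) (h t) with hle | hlt
  · exact mul_le_mul (Real.rpow_le_rpow (hnn s hs) hle (by positivity))
      (tail_antitoneOn hI hrpow_nn hs ht hst) (tail_nonneg hrpow_nn ht)
      (Real.rpow_nonneg (hnn t ht) _)
  · have hst' : s < t := hst.lt_of_ne (by rintro rfl; exact hlt.false)
    linear_combination sub_rpow_mul_tail_le_of_concaveOn hconc hnn hp hs ht hst' hlt +
      h t ^ (p + 1) * integral_add_tail hI hs ht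

theorem concaveOn_tail_rpow (hab : a ≤ b) (hconc : ConcaveOn ℝ (Icc a b) h)
    (hnn : ∀ t ∈ Icc a b, 0 ≤ h t) (hpos : ∀ t ∈ Ioo a b, 0 < h t) (hp : 0 ≤ p) :
    ConcaveOn ℝ (Icc a b) fun t => (∫ u in t..b, h u ^ p) ^ (1 / (p + 1)) := by
  have hI := intervalIntegrable_rpow_of_concaveOn hab hconc hnn hp
  have hderiv : ∀ t ∈ Ioo a b, HasDerivAt (fun t => (∫ u in t..b, h u ^ p) ^ (1 / (p + 1)))
      (-(1 / (p + 1) * (h t ^ (p + 1) / ∫ u in t..b, h u ^ p) ^ (p / (p + 1)))) t := by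
    intro t ht
    have hT := tail_rpow_pos hconc hnn hpos hp (Ioo_subset_Ico_self ht)
    have hd := (hasDerivAt_tail hI (continuousOn_Ioo_rpow_of_concaveOn hconc hp) ht).rpow_const
      (p := 1 / (p + 1)) (Or.inl hT.ne')
    refine hd.congr_deriv ?_
    have hht := hpos t ht
    rw [Real.div_rpow (by positivity) hT.le, ← Real.rpow_mul hht.le,
      mul_div_cancel₀ _ (by positivity),
      show 1 / (p + 1) - 1 = -(p / (p + 1)) by field_simp; ring, Real.rpow_neg hT.le]
    ring
  refine AntitoneOn.concaveOn_of_deriv (convex_Icc a b)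
    ((continuousOn_tail hab hI).rpow_const fun _ _ => Or.inr (by positivity)) ?_ ?_ <;>
    rw [interior_Icc]
  · exact fun t ht => (hderiv t ht).differentiableAt.differentiableWithinAt
  · intro s hs t ht hst
    have hTs := tail_rpow_pos hconc hnn hpos hp (Ioo_subset_Ico_self hs)
    have hTt := tail_rpow_pos hconc hnn hpos hp (Ioo_subset_Ico_self ht)
    have hhs := hpos s hs
    have hmono : h s ^ (p + 1) / (∫ u in s..b, h u ^ p) ≤ h t ^ (p + 1) / ∫ u in t..b, h u ^ p :=
      (div_le_div_iff₀ hTs hTt).2 (rpow_mul_tail_le_of_concaveOn hconc hnn hp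
        (Ioo_subset_Icc_self hs) (Ioo_subset_Icc_self ht) hst)
    rw [(hderiv s hs).deriv, (hderiv t ht).deriv]
    gcongr

theorem rpow_mul_tail_rpow_le_of_concaveOn {q r : ℝ} (hconc : ConcaveOn ℝ (Icc a b) h)
    (hnn : ∀ t ∈ Icc a b, 0 ≤ h t) (hp : 0 ≤ p) (hr : 0 ≤ r) (hq : q * (p + 1) = r) {s t : ℝ}
    (hs : s ∈ Icc a b) (ht : t ∈ Icc a b) (hst : s ≤ t) :
    h s ^ r * (∫ u in t..b, h u ^ p) ^ q ≤ h t ^ r * (∫ u in s..b, h u ^ p) ^ q := by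
  have hq₀ : 0 ≤ q := nonneg_of_mul_nonneg_left (hq ▸ hr) (by linarith)
  have hT : ∀ u ∈ Icc a b, 0 ≤ ∫ v in u..b, h v ^ p := fun u hu =>
    tail_nonneg (fun v hv => Real.rpow_nonneg (hnn v hv) p) hu
  have hpow : ∀ u ∈ Icc a b, h u ^ r = (h u ^ (p + 1)) ^ q := fun u hu => by
    rw [← Real.rpow_mul (hnn u hu), mul_comm, hq]
  have hnn' : ∀ u ∈ Icc a b, 0 ≤ h u ^ (p + 1) := fun u hu => Real.rpow_nonneg (hnn u hu) _
  rw [hpow s hs, hpow t ht, ← Real.mul_rpow (hnn' s hs) (hT t ht),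
    ← Real.mul_rpow (hnn' t ht) (hT s hs)]
  exact Real.rpow_le_rpow (mul_nonneg (hnn' s hs) (hT t ht))
    (rpow_mul_tail_le_of_concaveOn hconc hnn hp hs ht hst) hq₀

theorem tail_rpow_mul_integral_rpow_le_of_concaveOn {α β x : ℝ} (hconc : ConcaveOn ℝ (Icc a b) h)
    (hnn : ∀ t ∈ Icc a b, 0 ≤ h t) (hα : 0 ≤ α) (hαβ : α ≤ β) (hx : x ∈ Icc a b) :
    (∫ t in x..b, h t ^ α) ^ ((β + 1) / (α + 1)) * ∫ t in a..b, h t ^ β ≤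
      (∫ t in a..b, h t ^ α) ^ ((β + 1) / (α + 1)) * ∫ t in x..b, h t ^ β := by
  have hab : a ≤ b := hx.1.trans hx.2
  have hβα : 0 ≤ β - α := sub_nonneg.2 hαβ
  have hfactor : ∀ t ∈ Icc a b, h t ^ β = h t ^ (β - α) * h t ^ α := fun t ht => by
    rw [← Real.rpow_add_of_nonneg (hnn t ht) hβα hα, sub_add_cancel]
  have hfactor_integral : ∀ s ∈ Icc a b,
      ∫ t in s..b, h t ^ β = ∫ t in s..b, h t ^ (β - α) * h t ^ α := fun s hs =>
    intervalIntegral.integral_congr fun t ht =>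
      hfactor t (Icc_subset_Icc_left hs.1 (uIcc_of_le hs.2 ▸ ht))
  rw [hfactor_integral a (left_mem_Icc.2 hab), hfactor_integral x hx,
    show (β + 1) / (α + 1) = (β - α) / (α + 1) + 1 by field_simp; ring]
  refine tail_rpow_mul_integral_mul_le (intervalIntegrable_rpow_of_concaveOn hab hconc hnn hα)
    (continuousOn_Ioo_rpow_of_concaveOn hconc hα) (fun t ht => Real.rpow_nonneg (hnn t ht) _) ?_
    (fun t ht => Real.rpow_nonneg (hnn t ht) _) (by positivity)
    (fun s hs t ht => rpow_mul_tail_rpow_le_of_concaveOn hconc hnn hα hβα (by field_simp) hs ht) hx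
  refine (intervalIntegrable_rpow_of_concaveOn hab hconc hnn (hα.trans hαβ)).congr fun t ht => ?_
  exact hfactor t (Ioc_subset_Icc_self (uIoc_of_le hab ▸ ht))

theorem add_one_div_add_two_le_tail_centroid_rpow (hab : a < b)
    (hconc : ConcaveOn ℝ (Icc a b) h) (hnn : ∀ t ∈ Icc a b, 0 ≤ h t)
    (hpos : ∀ t ∈ Ioo a b, 0 < h t) (hp : 0 ≤ p) :
    (p + 1) / (p + 2) ≤ ((∫ t in centroid a b (fun t => h t ^ p)..b, h t ^ p) /
      ∫ t in a..b, h t ^ p) ^ (1 / (p + 1)) := by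
  have hgruenbaum := inv_add_one_le_tail_centroid_rpow hab.le
    (intervalIntegrable_rpow_of_concaveOn hab.le hconc hnn hp)
    (continuousOn_Ioo_rpow_of_concaveOn hconc hp) (fun t ht => Real.rpow_nonneg (hnn t ht) p)
    (tail_rpow_pos hconc hnn hpos hp (left_mem_Ico.2 hab)) (by positivity)
    (concaveOn_tail_rpow hab.le hconc hnn hpos hp)
  convert hgruenbaum using 1
  field_simp
  ring

end ConcavePower

theorem stmt_1 (a b α β : ℝ) (h : ℝ → ℝ) (hab : a < b)
    (hconc : ConcaveOn ℝ (Set.Icc a b) h)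
    (hnn : ∀ t ∈ Set.Icc a b, 0 ≤ h t)
    (hint : 0 < ∫ t in a..b, h t)
    (hα : 0 < α) (hβ : 0 < β) (hαβ : α ≤ β) :
    (∫ t in ((∫ t in a..b, t * h t ^ α) / ∫ t in a..b, h t ^ α)..b, h t ^ β) /
      (∫ t in a..b, h t ^ β) ≥ ((α + 1) / (α + 2)) ^ (β + 1) := by
  have hpos := pos_of_concaveOn_of_integral_pos hab.le hconc hnn hint
  have hmass (p : ℝ) (hp : 0 < p) : 0 < ∫ t in a..b, h t ^ p :=
    tail_rpow_pos hconc hnn hpos hp.le (left_mem_Ico.2 hab)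
  have hrpow_nn : ∀ t ∈ Icc a b, 0 ≤ h t ^ α := fun t ht => Real.rpow_nonneg (hnn t ht) α
  set g := (∫ t in a..b, t * h t ^ α) / ∫ t in a..b, h t ^ α
  have hg : g ∈ Icc a b := centroid_mem_Icc hab.le
    (intervalIntegrable_rpow_of_concaveOn hab.le hconc hnn hα.le) hrpow_nn (hmass α hα)
  have htail : 0 ≤ ∫ t in g..b, h t ^ α := tail_nonneg hrpow_nn hg
  have hratio := div_nonneg htail (hmass α hα).le
  calc ((α + 1) / (α + 2)) ^ (β + 1)
      ≤ (((∫ t in g..b, h t ^ α) / ∫ t in a..b, h t ^ α) ^ (1 / (α + 1))) ^ (β + 1) :=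
        Real.rpow_le_rpow (by positivity)
          (add_one_div_add_two_le_tail_centroid_rpow hab hconc hnn hpos hα.le) (by positivity)
    _ = (∫ t in g..b, h t ^ α) ^ ((β + 1) / (α + 1)) /
          (∫ t in a..b, h t ^ α) ^ ((β + 1) / (α + 1)) := by
        rw [← Real.rpow_mul hratio, one_div_mul_eq_div, Real.div_rpow htail (hmass α hα).le]
    _ ≤ (∫ t in g..b, h t ^ β) / ∫ t in a..b, h t ^ β := by
        rw [div_le_div_iff₀ (Real.rpow_pos_of_pos (hmass α hα) _) (hmass β hβ),
          mul_comm (∫ t in g..b, h t ^ β)]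
        exact tail_rpow_mul_integral_rpow_le_of_concaveOn hconc hnn hα.le hαβ hg
end

section
/- Let r≥1 and p>0, and let f:[a,b]→[0,∞) be a p-concave function with positive integral such that a<0<b and the r-powered centroid (∫_a^b t f(t)^r dt)/(∫_a^b f(t)^r dt) equals 0. Then (∫_a^0 f(t) dt)/(∫_a^b f(t) dt) ≥ ((p+1)/(2p+r))^{(p+1)/p}. -/
/-!
Let `U t` be the fraction of the mass of `f` to the left of `t`, and put `s = p / (p + 1)`. Since
`f` is `p`-concave, `U ^ s` is concave, so Jensen's inequality for the density `f ^ r` bounds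
`U g ^ s` from below, `g` being the `r`-powered centroid, by the `f ^ r`-mean of `U ^ s`.
That mean is estimated in the variable `u = U t`: the weight `f ^ r dt` becomes `f ^ (r - 1) du`,
which is a nondecreasing multiple of `(1 - u) ^ ((r - 1) / (p + 1)) du` because, again by
`p`-concavity, `f ^ (p + 1) / (1 - U)` is nondecreasing. As `u ^ s` is increasing, dropping the
nondecreasing factor can only lower the mean.
-/

open Set MeasureTheory intervalIntegral

section WeightedIntegrals

variable {α β : ℝ} {w : ℝ → ℝ}

theorem centroid_mem_Ioo {g : ℝ} (hαβ : α < β) (hw : IntervalIntegrable w volume α β)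
    (hpos : ∀ t ∈ Ioo α β, 0 < w t) (hg : ∫ t in α..β, t * w t = g * ∫ t in α..β, w t) :
    g ∈ Ioo α β := by
  have htw : IntervalIntegrable (fun t => t * w t) volume α β :=
    hw.continuousOn_mul continuousOn_id
  have hzero : ∫ t in α..β, (t * w t - g * w t) = 0 := by
    rw [integral_sub htw (hw.const_mul g), intervalIntegral.integral_const_mul, hg, sub_self]
  constructor <;> by_contra! hle
  · refine (intervalIntegral_pos_of_pos_on (htw.sub (hw.const_mul g)) (fun t ht => ?_)
      hαβ).ne' hzero
    rw [← sub_mul]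
    exact mul_pos (sub_pos.2 (hle.trans_lt ht.1)) (hpos t ht)
  · refine (intervalIntegral_pos_of_pos_on (htw.sub (hw.const_mul g)).neg (fun t ht => ?_)
      hαβ).ne' ((intervalIntegral.integral_neg).trans (neg_eq_zero.2 hzero))
    rw [Pi.neg_apply, ← sub_mul]
    exact neg_pos.2 (mul_neg_of_neg_of_pos (sub_neg.2 (ht.2.trans_le hle)) (hpos t ht))

theorem exists_le_add_mul_sub_of_concaveOn {S : Set ℝ} {φ : ℝ → ℝ} {x : ℝ}
    (hφ : ConcaveOn ℝ S φ) (hx : x ∈ interior S) :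
    ∃ σ, ∀ t ∈ S, φ t ≤ φ x + σ * (t - x) := by
  have hxS := interior_subset hx
  refine ⟨-derivWithin (-φ) (Ioi x) x, fun t ht => ?_⟩
  rcases lt_trichotomy t x with hlt | rfl | hlt
  · have hle := (hφ.neg.slope_le_leftDeriv_of_mem_interior ht hx hlt).trans
      (hφ.neg.leftDeriv_le_rightDeriv_of_mem_interior hx)
    rw [slope_def_field, div_le_iff₀ (sub_pos.2 hlt)] at hle
    simp only [Pi.neg_apply] at hle
    linarith
  · simp
  · have hle := hφ.neg.rightDeriv_le_slope_of_mem_interior hx ht hlt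
    rw [slope_def_field, le_div_iff₀ (sub_pos.2 hlt)] at hle
    simp only [Pi.neg_apply] at hle
    linarith

theorem integral_mul_le_of_concaveOn {φ : ℝ → ℝ} {g : ℝ} (hφ : ConcaveOn ℝ (Icc α β) φ)
    (hgmem : g ∈ Ioo α β) (hw : IntervalIntegrable w volume α β)
    (hφw : IntervalIntegrable (fun t => φ t * w t) volume α β) (hnn : ∀ t ∈ Ioo α β, 0 ≤ w t)
    (hg : ∫ t in α..β, t * w t = g * ∫ t in α..β, w t) :
    ∫ t in α..β, φ t * w t ≤ φ g * ∫ t in α..β, w t := by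
  obtain ⟨σ, hσ⟩ := exists_le_add_mul_sub_of_concaveOn (x := g) hφ (by rwa [interior_Icc])
  have htw : IntervalIntegrable (fun t => t * w t) volume α β :=
    hw.continuousOn_mul continuousOn_id
  calc ∫ t in α..β, φ t * w t
      ≤ ∫ t in α..β, ((φ g - σ * g) * w t + σ * (t * w t)) := by
        refine integral_mono_on_of_le_Ioo (hgmem.1.trans hgmem.2).le hφw
          ((hw.const_mul _).add (htw.const_mul σ)) fun t ht => ?_
        have := mul_le_mul_of_nonneg_right (hσ t (Ioo_subset_Icc_self ht)) (hnn t ht)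
        linarith
    _ = φ g * ∫ t in α..β, w t := by
        rw [integral_add (hw.const_mul _) (htw.const_mul σ), intervalIntegral.integral_const_mul,
          intervalIntegral.integral_const_mul, hg]
        ring

/-- A form of Chebyshev's integral inequality: since `φ` changes sign at `t₀`, replacing the
monotone factor `v` by the constant `v t₀` decreases the integrand everywhere. -/
theorem integral_mul_mul_nonneg_of_monotoneOn {φ v : ℝ → ℝ} {t₀ : ℝ} (ht₀ : t₀ ∈ Ioo α β)
    (hφ : MonotoneOn φ (Ioo α β)) (hφt₀ : φ t₀ = 0) (hv : MonotoneOn v (Ioo α β))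
    (hvt₀ : 0 ≤ v t₀) (hnn : ∀ t ∈ Ioo α β, 0 ≤ w t)
    (hφw : IntervalIntegrable (fun t => φ t * w t) volume α β)
    (hφvw : IntervalIntegrable (fun t => φ t * (v t * w t)) volume α β)
    (hint : 0 ≤ ∫ t in α..β, φ t * w t) :
    0 ≤ ∫ t in α..β, φ t * (v t * w t) := by
  have hmul_le : ∀ t ∈ Ioo α β, φ t * v t₀ ≤ φ t * v t := fun t ht => by
    rcases le_total t₀ t with hle | hle
    · exact mul_le_mul_of_nonneg_left (hv ht₀ ht hle) (hφt₀ ▸ hφ ht₀ ht hle)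
    · exact mul_le_mul_of_nonpos_left (hv ht ht₀ hle) (hφt₀ ▸ hφ ht ht₀ hle)
  calc 0 ≤ v t₀ * ∫ t in α..β, φ t * w t := mul_nonneg hvt₀ hint
    _ = ∫ t in α..β, v t₀ * (φ t * w t) := (intervalIntegral.integral_const_mul ..).symm
    _ ≤ ∫ t in α..β, φ t * (v t * w t) := by
        refine integral_mono_on_of_le_Ioo (ht₀.1.trans ht₀.2).le (hφw.const_mul _) hφvw
          fun t ht => ?_
        have := mul_le_mul_of_nonneg_right (hmul_le t ht) (hnn t ht)
        linarith

theorem integral_eq_of_eq_zero_off_Icc {φ : ℝ → ℝ} {a b : ℝ} (hαβ : α ≤ β) (ha : a ≤ α)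
    (hb : β ≤ b) (hzero : ∀ t ∈ Icc a b \ Icc α β, φ t = 0) :
    ∫ t in a..b, φ t = ∫ t in α..β, φ t := by
  simp only [integral_of_le hαβ, integral_of_le (ha.trans (hαβ.trans hb)),
    ← integral_Icc_eq_integral_Ioc]
  exact setIntegral_eq_of_subset_of_forall_sdiff_eq_zero measurableSet_Icc
    (Icc_subset_Icc ha hb) hzero

end WeightedIntegrals

section PowersAndSlopes

theorem hasDerivAt_affine_rpow (c d A : ℝ) {q : ℝ} (hq : 0 ≤ q) (x : ℝ) :
    HasDerivAt (fun x => (d + A * (x - c)) ^ (q + 1)) (A * (q + 1) * (d + A * (x - c)) ^ q) x := by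
  have haff : HasDerivAt (fun x => d + A * (x - c)) A x := by
    simpa using (((hasDerivAt_id x).sub_const c).const_mul A).const_add d
  simpa using haff.rpow_const (p := q + 1) (Or.inr (by linarith))

theorem add_slope_mul_sub (φ : ℝ → ℝ) {s t : ℝ} (hst : s ≠ t) :
    φ s + slope φ s t * (t - s) = φ t := by
  rw [slope_def_field, div_mul_cancel₀ _ (sub_ne_zero.2 hst.symm), add_sub_cancel]

variable {S : Set ℝ} {φ : ℝ → ℝ} {s t x : ℝ}

theorem le_add_slope_mul_sub_of_concaveOn (hφ : ConcaveOn ℝ S φ) (hx : x ∈ S) (ht : t ∈ S)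
    (hxs : x < s) (hst : s < t) : φ x ≤ φ s + slope φ s t * (x - s) := by
  have hslope := hφ.slope_anti_adjacent hx ht hxs hst
  rw [← slope_def_field, le_div_iff₀ (sub_pos.2 hxs)] at hslope
  linarith

theorem add_slope_mul_sub_le_of_concaveOn (hφ : ConcaveOn ℝ S φ) (hs : s ∈ S) (ht : t ∈ S)
    (hsx : s < x) (hxt : x < t) : φ s + slope φ s t * (x - s) ≤ φ x := by
  have hslope := hφ.slope_anti hs ⟨hφ.1.ordConnected.out hs ht ⟨hsx.le, hxt.le⟩, hsx.ne'⟩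
    ⟨ht, (hsx.trans hxt).ne'⟩ hxt.le
  linarith [mul_le_mul_of_nonneg_right hslope (sub_pos.2 hsx).le, add_slope_mul_sub φ hsx.ne]

/-- The function `(u ^ (s + 1) - u) * (1 - u) ^ m` vanishes at `0` and `1`, and its derivative is at
most `s + 1 + m` times the integrand. -/
theorem integral_rpow_sub_mul_one_sub_rpow_nonneg {s m : ℝ} (hs0 : 0 ≤ s) (hs1 : s ≤ 1)
    (hm : 0 ≤ m) : 0 ≤ ∫ u in (0 : ℝ)..1, (u ^ s - 1 / (s + 1 + m)) * (1 - u) ^ m := by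
  have hderiv : ∀ u ∈ Ioo (0 : ℝ) 1, HasDerivAt (fun u => (u ^ (s + 1) - u) * (1 - u) ^ m)
      (((s + 1) * u ^ s - 1) * (1 - u) ^ m + (u ^ (s + 1) - u) * (-m * (1 - u) ^ (m - 1))) u :=
    fun u hu => by
      have hu' : 1 - u ≠ 0 := (sub_pos.2 hu.2).ne'
      simpa using ((Real.hasDerivAt_rpow_const (p := s + 1) (Or.inl hu.1.ne')).fun_sub
        (hasDerivAt_id u)).fun_mul
          (((hasDerivAt_id u).const_sub 1).rpow_const (p := m) (Or.inl hu'))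
  have hderiv_le : ∀ u ∈ Ioo (0 : ℝ) 1,
      ((s + 1) * u ^ s - 1) * (1 - u) ^ m + (u ^ (s + 1) - u) * (-m * (1 - u) ^ (m - 1)) ≤
        (s + 1 + m) * ((u ^ s - 1 / (s + 1 + m)) * (1 - u) ^ m) := fun u hu => by
    have hu' := sub_pos.2 hu.2
    have hle : u ≤ u ^ s := by simpa using Real.rpow_le_rpow_of_exponent_ge hu.1 hu.2.le hs1
    have hnn : 0 ≤ m * (1 - u) ^ (m - 1) * (u ^ s - u) :=
      mul_nonneg (mul_nonneg hm (Real.rpow_nonneg hu'.le _)) (sub_nonneg.2 hle)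
    have hpow : (1 - u) ^ m = (1 - u) ^ (m - 1) * (1 - u) := by
      rw [← Real.rpow_add_one hu'.ne', sub_add_cancel]
    rw [← mul_assoc (s + 1 + m), mul_sub (s + 1 + m), mul_one_div_cancel (by positivity), hpow,
      Real.rpow_add_one hu.1.ne']
    linarith
  have hcont : ∀ q : ℝ, 0 ≤ q → Continuous fun u : ℝ => u ^ q := fun q hq =>
    continuous_id.rpow_const fun _ => Or.inr hq
  have hm_cont : Continuous fun u : ℝ => (1 - u) ^ m :=
    (hcont m hm).comp (continuous_const.sub continuous_id)
  have hprim_cont : Continuous fun u : ℝ => (u ^ (s + 1) - u) * (1 - u) ^ m :=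
    ((hcont (s + 1) (by positivity)).sub continuous_id).mul hm_cont
  have hbound_cont : Continuous fun u : ℝ =>
      (s + 1 + m) * ((u ^ s - 1 / (s + 1 + m)) * (1 - u) ^ m) :=
    continuous_const.mul (((hcont s hs0).sub continuous_const).mul hm_cont)
  have hint := sub_le_integral_of_hasDeriv_right_of_le zero_le_one hprim_cont.continuousOn
    (fun u hu => (hderiv u hu).hasDerivWithinAt) hbound_cont.integrableOn_Icc hderiv_le
  have hs' : s + 1 ≠ 0 := by positivity
  rw [intervalIntegral.integral_const_mul] at hint
  refine (mul_nonneg_iff_of_pos_left (show 0 < s + 1 + m by positivity)).1 ?_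
  simpa [Real.zero_rpow hs'] using hint

end PowersAndSlopes

/-- `f` is positive on the nonempty open interval `(α, β)` and `p`-concave there, with `p > 0`:
the behaviour of a `p`-concave function on the interior of its support. -/
structure PosPConcaveOn (p α β : ℝ) (f : ℝ → ℝ) : Prop where
  p_pos : 0 < p
  lt : α < β
  pos : ∀ x ∈ Ioo α β, 0 < f x
  concaveOn : ConcaveOn ℝ (Ioo α β) fun t => f t ^ p

/-- The fraction of the mass of `f` on `[α, β]` that lies to the left of `t`. -/
noncomputable def massFraction (f : ℝ → ℝ) (α β t : ℝ) : ℝ :=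
  (∫ x in α..t, f x) / ∫ x in α..β, f x

theorem massFraction_left (f : ℝ → ℝ) (α β : ℝ) : massFraction f α β α = 0 := by
  simp [massFraction]

theorem exists_posPConcaveOn {a b p : ℝ} {f : ℝ → ℝ} (hp : 0 < p) (hab : a ≤ b)
    (hnn : ∀ t ∈ Icc a b, 0 ≤ f t)
    (hconc : ConcaveOn ℝ (Icc a b ∩ {t | 0 < f t}) fun t => f t ^ p)
    (hint : 0 < ∫ t in a..b, f t) :
    ∃ α β, a ≤ α ∧ β ≤ b ∧ PosPConcaveOn p α β f ∧ ∀ t ∈ Icc a b \ Icc α β, f t = 0 := by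
  set S := Icc a b ∩ {t | 0 < f t}
  have hzero : ∀ x ∈ Icc a b, x ∉ S → f x = 0 := fun x hx hxS =>
    le_antisymm (not_lt.1 fun hpos => hxS ⟨hx, hpos⟩) (hnn x hx)
  have hnontrivial : S.Nontrivial := by
    by_contra hsub
    rw [not_nontrivial_iff] at hsub
    refine hint.ne' (integral_zero_ae ?_)
    filter_upwards [hsub.countable.ae_notMem volume] with x hx hxab
    rw [uIoc_of_le hab] at hxab
    exact hzero x (Ioc_subset_Icc_self hxab) hx
  have hne := hnontrivial.nonempty
  have hbelow : BddBelow S := ⟨a, fun x hx => hx.1.1⟩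
  have habove : BddAbove S := ⟨b, fun x hx => hx.1.2⟩
  have hIoo : Ioo (sInf S) (sSup S) ⊆ S := fun x hx => by
    obtain ⟨y, hy, hyx⟩ := exists_lt_of_csInf_lt hne hx.1
    obtain ⟨z, hz, hxz⟩ := exists_lt_of_lt_csSup hne hx.2
    exact hconc.1.ordConnected.out hy hz ⟨hyx.le, hxz.le⟩
  obtain ⟨x, hx, y, hy, hxy⟩ := hnontrivial.exists_lt
  have hlt : sInf S < sSup S := (csInf_le hbelow hx).trans_lt (hxy.trans_le (le_csSup habove hy))
  exact ⟨sInf S, sSup S, le_csInf hne fun x hx => hx.1.1, csSup_le hne fun x hx => hx.1.2,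
    ⟨hp, hlt, fun x hx => (hIoo hx).2, hconc.subset hIoo (convex_Ioo _ _)⟩,
    fun x hx => hzero x hx.1 fun hxS => hx.2 ⟨csInf_le hbelow hxS, le_csSup habove hxS⟩⟩

namespace PosPConcaveOn

variable {p α β : ℝ} {f : ℝ → ℝ}

theorem left_mem_Icc (h : PosPConcaveOn p α β f) : α ∈ Icc α β := Set.left_mem_Icc.2 h.lt.le

theorem right_mem_Icc (h : PosPConcaveOn p α β f) : β ∈ Icc α β := Set.right_mem_Icc.2 h.lt.le

theorem comp_neg (h : PosPConcaveOn p α β f) :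
    PosPConcaveOn p (-β) (-α) fun t => f (-t) where
  p_pos := h.p_pos
  lt := neg_lt_neg h.lt
  pos x hx := h.pos _ ⟨lt_neg_of_lt_neg hx.2, neg_lt.1 hx.1⟩
  concaveOn := by
    have hneg := h.concaveOn.comp_linearMap (-LinearMap.id)
    have hpre : (-LinearMap.id : ℝ →ₗ[ℝ] ℝ) ⁻¹' Ioo α β = Ioo (-β) (-α) := by
      ext x
      simp [lt_neg, neg_lt, and_comm]
    rwa [hpre] at hneg

theorem continuousOn (h : PosPConcaveOn p α β f) : ContinuousOn f (Ioo α β) :=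
  ((h.concaveOn.continuousOn isOpen_Ioo).rpow_const (p := p⁻¹)
    fun _ _ => Or.inr (inv_pos.2 h.p_pos).le).congr
    fun x hx => (Real.rpow_rpow_inv (h.pos x hx).le h.p_pos.ne').symm

theorem exists_le (h : PosPConcaveOn p α β f) : ∃ C, ∀ x ∈ Ioo α β, f x ≤ C := by
  refine ⟨(2 * f ((α + β) / 2) ^ p) ^ p⁻¹, fun x hx => ?_⟩
  have hx' : α + β - x ∈ Ioo α β := ⟨by linarith [hx.2], by linarith [hx.1]⟩
  have hmid := h.concaveOn.2 hx hx' one_half_pos.le one_half_pos.le (add_halves 1)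
  rw [show (1 / 2 : ℝ) • x + (1 / 2 : ℝ) • (α + β - x) = (α + β) / 2 by
    simp only [smul_eq_mul]; ring] at hmid
  simp only [smul_eq_mul] at hmid
  have hpow := Real.rpow_nonneg (h.pos x hx).le p
  rw [← Real.rpow_rpow_inv (h.pos x hx).le h.p_pos.ne']
  exact Real.rpow_le_rpow hpow (by linarith [Real.rpow_nonneg (h.pos _ hx').le p])
    (inv_pos.2 h.p_pos).le

theorem integrableOn_rpow (h : PosPConcaveOn p α β f) {q : ℝ} (hq : 0 ≤ q) :
    IntegrableOn (fun t => f t ^ q) (Icc α β) := by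
  obtain ⟨C, hC⟩ := h.exists_le
  rw [integrableOn_Icc_iff_integrableOn_Ioo]
  refine Integrable.of_bound ((h.continuousOn.rpow_const
    fun _ _ => Or.inr hq).aestronglyMeasurable measurableSet_Ioo) (C ^ q) ?_
  refine (ae_restrict_iff' measurableSet_Ioo).2 (Filter.Eventually.of_forall fun x hx => ?_)
  rw [Real.norm_of_nonneg (Real.rpow_nonneg (h.pos x hx).le q)]
  exact Real.rpow_le_rpow (h.pos x hx).le (hC x hx) hq

theorem intervalIntegrable_rpow (h : PosPConcaveOn p α β f) {q : ℝ} (hq : 0 ≤ q) :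
    IntervalIntegrable (fun t => f t ^ q) volume α β :=
  (intervalIntegrable_iff_integrableOn_Icc_of_le h.lt.le).2 (h.integrableOn_rpow hq)

theorem integrableOn (h : PosPConcaveOn p α β f) : IntegrableOn f (Icc α β) := by
  simpa using h.integrableOn_rpow zero_le_one

theorem intervalIntegrable (h : PosPConcaveOn p α β f) {u v : ℝ} (hu : u ∈ Icc α β)
    (hv : v ∈ Icc α β) : IntervalIntegrable f volume u v :=
  (h.integrableOn.mono_set (uIcc_subset_Icc hu hv)).intervalIntegrable

theorem integral_rpow_pos (h : PosPConcaveOn p α β f) {q : ℝ} (hq : 0 ≤ q) :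
    0 < ∫ t in α..β, f t ^ q :=
  intervalIntegral_pos_of_pos_on (h.intervalIntegrable_rpow hq)
    (fun x hx => Real.rpow_pos_of_pos (h.pos x hx) q) h.lt

theorem integral_pos (h : PosPConcaveOn p α β f) {u v : ℝ} (hu : u ∈ Icc α β)
    (hv : v ∈ Icc α β) (huv : u < v) : 0 < ∫ t in u..v, f t :=
  intervalIntegral_pos_of_pos_on (h.intervalIntegrable hu hv)
    (fun x hx => h.pos x ⟨hu.1.trans_lt hx.1, hx.2.trans_le hv.2⟩) huv

theorem rpow_rpow_inv_add_one (h : PosPConcaveOn p α β f) {x : ℝ} (hx : x ∈ Ioo α β) :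
    (f x ^ p) ^ (p⁻¹ + 1) = f x ^ (p + 1) := by
  rw [← Real.rpow_mul (h.pos x hx).le, mul_add, mul_inv_cancel₀ h.p_pos.ne', mul_one, add_comm 1]

theorem slope_mul_integral_left_le (h : PosPConcaveOn p α β f) {s t : ℝ} (hs : s ∈ Ioo α β)
    (ht : t ∈ Ioo α β) (hst : s < t) (hslope : 0 ≤ slope (fun x => f x ^ p) s t) :
    slope (fun x => f x ^ p) s t * (p⁻¹ + 1) * ∫ x in α..s, f x ≤ f s ^ (p + 1) := by
  have hp := h.p_pos
  set A := slope (fun x => f x ^ p) s t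
  have hle : ∀ x ∈ Ioo α s, f x ^ p ≤ f s ^ p + A * (x - s) := fun x hx =>
    le_add_slope_mul_sub_of_concaveOn h.concaveOn ⟨hx.1, hx.2.trans hs.2⟩ ht hx.2 hst
  have hpos : ∀ x ∈ Ioo α s, 0 < f x := fun x hx => h.pos x ⟨hx.1, hx.2.trans hs.2⟩
  have hα : 0 ≤ f s ^ p + A * (α - s) := by
    have hclosed : IsClosed {x | 0 ≤ f s ^ p + A * (x - s)} :=
      isClosed_le continuous_const (by fun_prop)
    refine closure_minimal (fun x hx => ?_) hclosed
      ((closure_Ioo hs.1.ne).symm ▸ Set.left_mem_Icc.2 hs.1.le)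
    exact (Real.rpow_nonneg (hpos x hx).le p).trans (hle x hx)
  have hderiv := hasDerivAt_affine_rpow s (f s ^ p) A (inv_pos.2 hp).le
  have hint := integral_le_sub_of_hasDeriv_right_of_le hs.1.le
    (fun x _ => (hderiv x).continuousAt.continuousWithinAt)
    (fun x _ => (hderiv x).hasDerivWithinAt)
    ((h.integrableOn.mono_set (Icc_subset_Icc le_rfl hs.2.le)).const_mul (A * (p⁻¹ + 1)))
    (fun x hx => by
      refine mul_le_mul_of_nonneg_left ?_ (by positivity)
      rw [← Real.rpow_rpow_inv (hpos x hx).le hp.ne']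
      exact Real.rpow_le_rpow (Real.rpow_nonneg (hpos x hx).le p) (hle x hx) (by positivity))
  rw [intervalIntegral.integral_const_mul, sub_self, mul_zero, add_zero,
    h.rpow_rpow_inv_add_one hs] at hint
  exact hint.trans (sub_le_self _ (Real.rpow_nonneg hα _))

theorem rpow_sub_rpow_le_slope_mul_integral (h : PosPConcaveOn p α β f) {s t : ℝ}
    (hs : s ∈ Ioo α β) (ht : t ∈ Ioo α β) (hst : s < t)
    (hslope : 0 ≤ slope (fun x => f x ^ p) s t) :
    f t ^ (p + 1) - f s ^ (p + 1) ≤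
      slope (fun x => f x ^ p) s t * (p⁻¹ + 1) * ∫ x in s..t, f x := by
  have hp := h.p_pos
  have hend := add_slope_mul_sub (fun x => f x ^ p) hst.ne
  set A := slope (fun x => f x ^ p) s t
  have hderiv := hasDerivAt_affine_rpow s (f s ^ p) A (inv_pos.2 hp).le
  have hint := sub_le_integral_of_hasDeriv_right_of_le hst.le
    (fun x _ => (hderiv x).continuousAt.continuousWithinAt)
    (fun x _ => (hderiv x).hasDerivWithinAt)
    ((h.integrableOn.mono_set (Icc_subset_Icc hs.1.le ht.2.le)).const_mul (A * (p⁻¹ + 1)))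
    (fun x hx => by
      refine mul_le_mul_of_nonneg_left ?_ (by positivity)
      rw [← Real.rpow_rpow_inv (h.pos x ⟨hs.1.trans hx.1, hx.2.trans ht.2⟩).le hp.ne']
      exact Real.rpow_le_rpow (add_nonneg (Real.rpow_nonneg (h.pos s hs).le p)
          (mul_nonneg hslope (sub_pos.2 hx.1).le))
        (add_slope_mul_sub_le_of_concaveOn h.concaveOn hs ht hx.1 hx.2) (by positivity))
  rwa [intervalIntegral.integral_const_mul, hend, sub_self, mul_zero, add_zero,
    h.rpow_rpow_inv_add_one hs, h.rpow_rpow_inv_add_one ht] at hint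

theorem antitoneOn_rpow_div_integral_left (h : PosPConcaveOn p α β f) :
    AntitoneOn (fun t => f t ^ (p + 1) / ∫ x in α..t, f x) (Ioo α β) := by
  intro s hs t ht hst
  rcases hst.eq_or_lt with rfl | hst
  · rfl
  have hs' := Ioo_subset_Icc_self hs
  have ht' := Ioo_subset_Icc_self ht
  have hFs := h.integral_pos h.left_mem_Icc hs' hs.1
  have hFt := h.integral_pos h.left_mem_Icc ht' ht.1
  have hFst := h.integral_pos hs' ht' hst
  have hadd := integral_add_adjacent_intervals (h.intervalIntegrable h.left_mem_Icc hs')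
    (h.intervalIntegrable hs' ht')
  rcases le_or_gt (f t) (f s) with hle | hlt
  · exact div_le_div₀ (Real.rpow_nonneg (h.pos s hs).le _)
      (Real.rpow_le_rpow (h.pos t ht).le hle (by linarith [h.p_pos])) hFs (by linarith)
  have hslope : 0 ≤ slope (fun x => f x ^ p) s t := by
    rw [slope_def_field]
    exact div_nonneg (sub_nonneg.2 (Real.rpow_le_rpow (h.pos s hs).le hlt.le h.p_pos.le))
      (sub_pos.2 hst).le
  have hleft := mul_le_mul_of_nonneg_right (h.slope_mul_integral_left_le hs ht hst hslope) hFst.le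
  have hright := mul_le_mul_of_nonneg_right
    (h.rpow_sub_rpow_le_slope_mul_integral hs ht hst hslope) hFs.le
  rw [div_le_div_iff₀ hFt hFs, ← hadd]
  linarith

theorem monotoneOn_rpow_div_integral_right (h : PosPConcaveOn p α β f) :
    MonotoneOn (fun t => f t ^ (p + 1) / ∫ x in t..β, f x) (Ioo α β) := by
  intro s hs t ht hst
  simpa [integral_comp_neg] using h.comp_neg.antitoneOn_rpow_div_integral_left
    ⟨neg_lt_neg ht.2, neg_lt_neg ht.1⟩ ⟨neg_lt_neg hs.2, neg_lt_neg hs.1⟩ (neg_le_neg hst)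

theorem hasDerivAt_integral_left (h : PosPConcaveOn p α β f) {t : ℝ} (ht : t ∈ Ioo α β) :
    HasDerivAt (fun t => ∫ x in α..t, f x) (f t) t :=
  integral_hasDerivAt_right (h.intervalIntegrable h.left_mem_Icc (Ioo_subset_Icc_self ht))
    (h.continuousOn.stronglyMeasurableAtFilter isOpen_Ioo t ht)
    (h.continuousOn.continuousAt (isOpen_Ioo.mem_nhds ht))

theorem continuousOn_integral_left (h : PosPConcaveOn p α β f) :
    ContinuousOn (fun t => ∫ x in α..t, f x) (Icc α β) := by
  rw [← uIcc_of_le h.lt.le]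
  exact continuousOn_primitive_interval (uIcc_of_le h.lt.le ▸ h.integrableOn)

theorem hasDerivAt_integral_left_rpow (h : PosPConcaveOn p α β f) {t : ℝ} (ht : t ∈ Ioo α β) :
    HasDerivAt (fun t => (∫ x in α..t, f x) ^ (p / (p + 1)))
      (p / (p + 1) * (f t ^ (p + 1) / ∫ x in α..t, f x) ^ (p + 1)⁻¹) t := by
  have hp1 : p + 1 ≠ 0 := by linarith [h.p_pos]
  have hF := h.integral_pos h.left_mem_Icc (Ioo_subset_Icc_self ht) ht.1
  refine ((h.hasDerivAt_integral_left ht).rpow_const (Or.inl hF.ne')).congr_deriv ?_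
  rw [Real.div_rpow (Real.rpow_nonneg (h.pos t ht).le _) hF.le,
    Real.rpow_rpow_inv (h.pos t ht).le hp1,
    show p / (p + 1) - 1 = -(p + 1)⁻¹ by field_simp; ring, Real.rpow_neg hF.le]
  ring

theorem concaveOn_integral_left_rpow (h : PosPConcaveOn p α β f) :
    ConcaveOn ℝ (Icc α β) fun t => (∫ x in α..t, f x) ^ (p / (p + 1)) := by
  have hp := h.p_pos
  refine AntitoneOn.concaveOn_of_deriv (convex_Icc _ _)
    (h.continuousOn_integral_left.rpow_const fun _ _ => Or.inr (by positivity)) ?_ ?_ <;>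
    rw [interior_Icc]
  · exact fun t ht =>
      (h.hasDerivAt_integral_left_rpow ht).differentiableAt.differentiableWithinAt
  · intro s hs t ht hst
    rw [(h.hasDerivAt_integral_left_rpow hs).deriv, (h.hasDerivAt_integral_left_rpow ht).deriv]
    have hFt := h.integral_pos h.left_mem_Icc (Ioo_subset_Icc_self ht) ht.1
    exact mul_le_mul_of_nonneg_left (Real.rpow_le_rpow
      (div_nonneg (Real.rpow_nonneg (h.pos t ht).le _) hFt.le)
      (h.antitoneOn_rpow_div_integral_left hs ht hst) (by positivity)) (by positivity)

section MassFraction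

theorem integral_total_pos (h : PosPConcaveOn p α β f) : 0 < ∫ x in α..β, f x :=
  h.integral_pos h.left_mem_Icc h.right_mem_Icc h.lt

theorem massFraction_right (h : PosPConcaveOn p α β f) : massFraction f α β β = 1 :=
  div_self h.integral_total_pos.ne'

theorem one_sub_massFraction (h : PosPConcaveOn p α β f) {t : ℝ} (ht : t ∈ Icc α β) :
    1 - massFraction f α β t = (∫ x in t..β, f x) / ∫ x in α..β, f x := by
  rw [massFraction, one_sub_div h.integral_total_pos.ne',
    ← integral_add_adjacent_intervals (h.intervalIntegrable h.left_mem_Icc ht)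
      (h.intervalIntegrable ht h.right_mem_Icc), add_sub_cancel_left]

theorem massFraction_pos (h : PosPConcaveOn p α β f) {t : ℝ} (ht : t ∈ Ioo α β) :
    0 < massFraction f α β t :=
  div_pos (h.integral_pos h.left_mem_Icc (Ioo_subset_Icc_self ht) ht.1) h.integral_total_pos

theorem one_sub_massFraction_pos (h : PosPConcaveOn p α β f) {t : ℝ} (ht : t ∈ Ioo α β) :
    0 < 1 - massFraction f α β t := by
  rw [h.one_sub_massFraction (Ioo_subset_Icc_self ht)]
  exact div_pos (h.integral_pos (Ioo_subset_Icc_self ht) h.right_mem_Icc ht.2)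
    h.integral_total_pos

theorem continuousOn_massFraction (h : PosPConcaveOn p α β f) :
    ContinuousOn (massFraction f α β) (Icc α β) :=
  h.continuousOn_integral_left.div_const _

theorem hasDerivAt_massFraction (h : PosPConcaveOn p α β f) {t : ℝ} (ht : t ∈ Ioo α β) :
    HasDerivAt (massFraction f α β) (f t / ∫ x in α..β, f x) t :=
  (h.hasDerivAt_integral_left ht).div_const _

theorem monotoneOn_massFraction (h : PosPConcaveOn p α β f) :
    MonotoneOn (massFraction f α β) (Ioo α β) := by
  refine monotoneOn_of_deriv_nonneg (convex_Ioo α β)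
    (h.continuousOn_massFraction.mono Ioo_subset_Icc_self) ?_ ?_ <;> rw [interior_Ioo]
  · exact fun t ht => (h.hasDerivAt_massFraction ht).differentiableAt.differentiableWithinAt
  · intro t ht
    rw [(h.hasDerivAt_massFraction ht).deriv]
    exact (div_pos (h.pos t ht) h.integral_total_pos).le

theorem exists_massFraction_eq (h : PosPConcaveOn p α β f) {u : ℝ} (hu : u ∈ Ioo 0 1) :
    ∃ t ∈ Ioo α β, massFraction f α β t = u := by
  rw [← massFraction_left f α β, ← h.massFraction_right] at hu
  exact intermediate_value_Ioo h.lt.le h.continuousOn_massFraction hu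

theorem concaveOn_massFraction_rpow (h : PosPConcaveOn p α β f) :
    ConcaveOn ℝ (Icc α β) fun t => massFraction f α β t ^ (p / (p + 1)) := by
  have hJ := h.integral_total_pos.le
  refine (h.concaveOn_integral_left_rpow.smul
    (inv_nonneg.2 (Real.rpow_nonneg hJ (p / (p + 1))))).congr fun t ht => ?_
  have hF : 0 ≤ ∫ x in α..t, f x := by
    rcases ht.1.eq_or_lt with rfl | hlt
    · exact integral_same.ge
    · exact (h.integral_pos h.left_mem_Icc ht hlt).le
  simp only [massFraction, smul_eq_mul]
  rw [Real.div_rpow hF hJ]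
  exact (div_eq_inv_mul _ _).symm

theorem monotoneOn_rpow_div_one_sub_massFraction (h : PosPConcaveOn p α β f) :
    MonotoneOn (fun t => f t ^ (p + 1) / (1 - massFraction f α β t)) (Ioo α β) := by
  have hmono : MonotoneOn (fun t => (f t ^ (p + 1) / ∫ x in t..β, f x) * ∫ x in α..β, f x)
      (Ioo α β) := fun s hs t ht hst => mul_le_mul_of_nonneg_right
    (h.monotoneOn_rpow_div_integral_right hs ht hst) h.integral_total_pos.le
  refine hmono.congr fun t ht => ?_
  simp only [h.one_sub_massFraction (Ioo_subset_Icc_self ht), div_div_eq_mul_div,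
    div_mul_eq_mul_div]

theorem integral_comp_massFraction_mul (h : PosPConcaveOn p α β f) (φ : ℝ → ℝ) :
    ∫ t in α..β, φ (massFraction f α β t) * f t =
      (∫ u in (0 : ℝ)..1, φ u) * ∫ x in α..β, f x := by
  have hJ := h.integral_total_pos
  have hsubst := integral_comp_mul_deriv_of_deriv_nonneg (a := α) (b := β)
    (f := massFraction f α β) (f' := fun t => f t / ∫ x in α..β, f x) (g := φ)
    (uIcc_of_le h.lt.le ▸ h.continuousOn_massFraction)
    (fun t ht => h.hasDerivAt_massFraction (uIoo_of_le h.lt.le ▸ ht))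
    (fun t ht => (div_pos (h.pos t (uIoo_of_le h.lt.le ▸ ht)) hJ).le)
  rw [massFraction_left, h.massFraction_right] at hsubst
  rw [← hsubst, ← intervalIntegral.integral_mul_const]
  refine integral_congr fun t _ => ?_
  simp only [Function.comp_apply]
  field_simp

theorem rpow_eq_mul_one_sub_massFraction_rpow (h : PosPConcaveOn p α β f) (r : ℝ) {t : ℝ}
    (ht : t ∈ Ioo α β) :
    f t ^ r = (f t ^ (p + 1) / (1 - massFraction f α β t)) ^ ((r - 1) / (p + 1)) *
      ((1 - massFraction f α β t) ^ ((r - 1) / (p + 1)) * f t) := by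
  have hp1 : p + 1 ≠ 0 := by linarith [h.p_pos]
  have hf := h.pos t ht
  have hV := h.one_sub_massFraction_pos ht
  rw [← mul_assoc, ← Real.mul_rpow (by positivity) hV.le, div_mul_cancel₀ _ hV.ne',
    ← Real.rpow_mul hf.le, mul_div_cancel₀ _ hp1, ← Real.rpow_add_one hf.ne', sub_add_cancel]

theorem integral_massFraction_rpow_sub_mul_rpow_nonneg (h : PosPConcaveOn p α β f) {r s : ℝ}
    (hr : 1 ≤ r) (hs0 : 0 < s) (hs1 : s ≤ 1) :
    0 ≤ ∫ t in α..β,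
      (massFraction f α β t ^ s - 1 / (s + 1 + (r - 1) / (p + 1))) * f t ^ r := by
  have hp := h.p_pos
  set U := massFraction f α β
  set m := (r - 1) / (p + 1)
  set c := 1 / (s + 1 + m) with hc
  have hm0 : 0 ≤ m := div_nonneg (by linarith) (by positivity)
  have hc0 : 0 < c := by positivity
  have hc1 : c < 1 := by rw [hc, div_lt_one (by positivity)]; linarith
  obtain ⟨t₀, ht₀, (hUt₀ : U t₀ = c ^ s⁻¹)⟩ := h.exists_massFraction_eq (u := c ^ s⁻¹)
    ⟨by positivity, Real.rpow_lt_one hc0.le hc1 (by positivity)⟩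
  have hρ0 : ∀ t ∈ Ioo α β, 0 ≤ f t ^ (p + 1) / (1 - U t) := fun t ht =>
    div_nonneg (Real.rpow_nonneg (h.pos t ht).le _) (h.one_sub_massFraction_pos ht).le
  have hUc : ContinuousOn U (uIcc α β) := uIcc_of_le h.lt.le ▸ h.continuousOn_massFraction
  have hφc : ContinuousOn (fun t => U t ^ s - c) (uIcc α β) :=
    (hUc.rpow_const fun _ _ => Or.inr hs0.le).sub continuousOn_const
  have hwc : ContinuousOn (fun t => (1 - U t) ^ m) (uIcc α β) :=
    (continuousOn_const.sub hUc).rpow_const fun _ _ => Or.inr hm0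
  have hfactor : EqOn (fun t => (U t ^ s - c) * f t ^ r) (fun t => (U t ^ s - c) *
      ((f t ^ (p + 1) / (1 - U t)) ^ m * ((1 - U t) ^ m * f t))) (uIoo α β) := by
    rw [uIoo_of_le h.lt.le]
    exact fun t ht => congrArg _ (h.rpow_eq_mul_one_sub_massFraction_rpow r ht)
  rw [integral_congr_uIoo hfactor]
  refine integral_mul_mul_nonneg_of_monotoneOn ht₀ (fun x hx y hy hxy => ?_) ?_
    (fun x hx y hy hxy => ?_) (Real.rpow_nonneg (hρ0 t₀ ht₀) m) (fun t ht => ?_) ?_ ?_ ?_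
  · exact sub_le_sub_right (Real.rpow_le_rpow (h.massFraction_pos hx).le
      (h.monotoneOn_massFraction hx hy hxy) hs0.le) c
  · rw [hUt₀, Real.rpow_inv_rpow hc0.le hs0.ne', sub_self]
  · exact Real.rpow_le_rpow (hρ0 x hx) (h.monotoneOn_rpow_div_one_sub_massFraction hx hy hxy) hm0
  · exact mul_nonneg (Real.rpow_nonneg (h.one_sub_massFraction_pos ht).le m) (h.pos t ht).le
  · exact ((h.intervalIntegrable h.left_mem_Icc h.right_mem_Icc).continuousOn_mul
      hwc).continuousOn_mul hφc
  · exact (((h.intervalIntegrable_rpow (by linarith)).continuousOn_mul hφc).congr_uIoo hfactor)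
  · simp only [← mul_assoc]
    rw [h.integral_comp_massFraction_mul fun u => (u ^ s - c) * (1 - u) ^ m]
    exact mul_nonneg (integral_rpow_sub_mul_one_sub_rpow_nonneg hs0.le hs1 hm0)
      h.integral_total_pos.le

theorem rpow_le_massFraction_centroid (h : PosPConcaveOn p α β f) {r g : ℝ} (hr : 1 ≤ r)
    (hg : ∫ t in α..β, t * f t ^ r = g * ∫ t in α..β, f t ^ r) :
    ((p + 1) / (2 * p + r)) ^ ((p + 1) / p) ≤ massFraction f α β g := by
  have hp := h.p_pos
  have hr0 : 0 ≤ r := by linarith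
  have hw := h.intervalIntegrable_rpow hr0
  have hgmem := centroid_mem_Ioo h.lt hw (fun t ht => Real.rpow_pos_of_pos (h.pos t ht) r) hg
  have hUw : IntervalIntegrable (fun t => massFraction f α β t ^ (p / (p + 1)) * f t ^ r)
      volume α β := hw.continuousOn_mul
    ((uIcc_of_le h.lt.le ▸ h.continuousOn_massFraction).rpow_const
      fun _ _ => Or.inr (by positivity))
  have hjensen := integral_mul_le_of_concaveOn h.concaveOn_massFraction_rpow hgmem hw hUw
    (fun t ht => Real.rpow_nonneg (h.pos t ht).le r) hg
  have hmean := h.integral_massFraction_rpow_sub_mul_rpow_nonneg hr (s := p / (p + 1))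
    (by positivity) ((div_le_one (by positivity)).2 (by linarith))
  have hconst : 1 / (p / (p + 1) + 1 + (r - 1) / (p + 1)) = (p + 1) / (2 * p + r) := by
    rw [div_add_one (by positivity), ← add_div, one_div_div]
    ring_nf
  simp only [sub_mul, hconst] at hmean
  rw [integral_sub hUw (hw.const_mul _), intervalIntegral.integral_const_mul, sub_nonneg] at hmean
  have hle : (p + 1) / (2 * p + r) ≤ massFraction f α β g ^ (p / (p + 1)) :=
    le_of_mul_le_mul_right (hmean.trans hjensen) (h.integral_rpow_pos hr0)
  rw [← inv_div p (p + 1)]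
  exact (Real.rpow_inv_le_iff_of_pos (by positivity) (h.massFraction_pos hgmem).le
    (by positivity)).2 hle

end MassFraction

end PosPConcaveOn

theorem stmt_4 (a b p r : ℝ) (f : ℝ → ℝ) (ha : a < 0) (hb : 0 < b)
    (hp : 0 < p) (hr : 1 ≤ r)
    (hnn : ∀ t ∈ Set.Icc a b, 0 ≤ f t)
    (hconc : ConcaveOn ℝ (Set.Icc a b ∩ {t | 0 < f t}) (fun t => f t ^ p))
    (hint : 0 < ∫ t in a..b, f t)
    (hcent : (∫ t in a..b, t * f t ^ r) / (∫ t in a..b, f t ^ r) = 0) :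
    (∫ t in a..(0 : ℝ), f t) / (∫ t in a..b, f t) ≥
      ((p + 1) / (2 * p + r)) ^ ((p + 1) / p) := by
  obtain ⟨α, β, haα, hβb, h, hzero⟩ := exists_posPConcaveOn hp (ha.trans hb).le hnn hconc hint
  have hr0 : r ≠ 0 := by linarith
  have hrestrict {φ : ℝ → ℝ} (hφ : ∀ t, f t = 0 → φ t = 0) :
      ∫ t in a..b, φ t = ∫ t in α..β, φ t :=
    integral_eq_of_eq_zero_off_Icc h.lt.le haα hβb fun t ht => hφ t (hzero t ht)
  rw [hrestrict (fun t ht => by rw [ht, Real.zero_rpow hr0, mul_zero]),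
    hrestrict (fun t ht => by rw [ht, Real.zero_rpow hr0]), div_eq_zero_iff] at hcent
  have hmoment := hcent.resolve_right (h.integral_rpow_pos (by linarith)).ne'
  have hcentroid : ∫ t in α..β, t * f t ^ r = 0 * ∫ t in α..β, f t ^ r := by
    rw [hmoment, zero_mul]
  have h0 : 0 ∈ Ioo α β := centroid_mem_Ioo h.lt (h.intervalIntegrable_rpow (by linarith))
    (fun t ht => Real.rpow_pos_of_pos (h.pos t ht) r) hcentroid
  rw [hrestrict fun _ ht => ht, integral_eq_of_eq_zero_off_Icc h0.1.le haα le_rfl fun t ht =>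
    hzero t ⟨⟨ht.1.1, ht.1.2.trans hb.le⟩, fun ht' => ht.2 ⟨ht'.1, ht.1.2⟩⟩]
  exact h.rpow_le_massFraction_centroid hr hcentroid
end
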